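/- Under the stated parameter setting, for every k ∈ [K], every c > 0, and every interval [r, s] ⊆ [1, T] with length τ = s − r + 1 satisfying τ ≤ c·n^(k), the regret of B^K with respect to A^k satisfies: Σ_{t=r}^{s} ( f_t(v_t^K) + λG‖v_t^K − v_{t+1}^K‖ ) − Σ_{t=r}^{s} ( f_t(w_t^k) + λG‖w_t^k − w_{t+1}^k‖ ) ≤ G·D·max(√λ, 1)·( (12c + 53)·√(n^(k)·log T) + 9 + 6c + 6·(K − k) ). -/

import Mathlib

/-- The Gauss error function. -/
noncomputable def erf (x : ℝ) : ℝ :=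
  (2 / Real.sqrt Real.pi) * ∫ s in (0:ℝ)..x, Real.exp (-s ^ 2)

/-- The unclipped confidence function of Discounted-Normal-Predictor. -/
noncomputable def gtilde (n Z x : ℝ) : ℝ :=
  Real.sqrt (n / 8) * Z * erf (x / Real.sqrt (8 * n)) * Real.exp (x ^ 2 / (16 * n))

/-- The confidence function, the projection of the unclipped one onto `[0,1]`. -/
noncomputable def gconf (n Z x : ℝ) : ℝ := min (max (gtilde n Z x) 0) 1

/-- The window length of the i-th expert in smoothed OGD. -/
noncomputable def nfun (T i : ℕ) : ℝ := (T : ℝ) * (2 : ℝ) ^ ((1 : ℤ) - (i : ℤ))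

/-- The step size of the i-th OGD expert in smoothed OGD. -/
noncomputable def etafun (T : ℕ) (D G lam : ℝ) (i : ℕ) : ℝ :=
  (D / G) * Real.sqrt (1 / ((1 + 2 * lam) * nfun T i))

/-- Abstract properties of the confidence function. -/
structure GP (g : ℝ → ℝ) (n Z U : ℝ) : Prop where
  mono : Monotone g
  nonneg : ∀ x, 0 ≤ g x
  le_one : ∀ x, g x ≤ 1
  zero : ∀ x, x ≤ 0 → g x = 0
  one : ∀ x, U ≤ x → g x = 1
  lip : ∀ u v, u ≤ v → g v - g u ≤ (v - u) * (Z / 6 + min v U * g v / (8 * n))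

set_option maxHeartbeats 1000000 in
lemma GP.step {g : ℝ → ℝ} {n Z U m : ℝ} (h : GP g n Z U) (hZ : 0 < Z) (hm : 1 ≤ m) (hU : 0 < U)
    (hn : 32 * m ^ 2 ≤ n) (hUn : m * U ≤ 71 / 100 * n) (x y b : ℝ)
    (hx1 : -(1 / m) ≤ x) (hx2 : x ≤ U + 1 / m) (hb : |b| ≤ 1 / m)
    (hb0 : x < 0 → 0 ≤ b) (hbU : U < x → b ≤ 0) (hy : y = (1 - 1 / n) * x + b) :
    |y - x| ≤ 7 / 4 * (1 / m) ∧
    (g y - g x) * (y - x) + m / 3 * |g y - g x| ≤ g x * x / n + Z := by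
  have hm0 : 0 < m := by linarith
  have hn32 : 32 ≤ n := by nlinarith
  have hn0 : 0 < n := by linarith
  obtain ⟨q, hq⟩ : ∃ q, q = 1 / m := ⟨_, rfl⟩
  rw [← hq] at hx1 hx2 hb ⊢
  have hqm : q * m = 1 := by rw [hq]; field_simp
  have hq0 : 0 < q := by rw [hq]; positivity
  have hq1 : q ≤ 1 := by nlinarith
  obtain ⟨e, he⟩ : ∃ e, e = 1 / n := ⟨_, rfl⟩
  have hen : e * n = 1 := by rw [he]; field_simp
  have he0 : 0 < e := by rw [he]; positivity
  have he1 : e ≤ 1 / 32 := by nlinarith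
  have hdiv : ∀ z : ℝ, z / n = z * e := fun z => by rw [he]; ring
  have hdiv8 : ∀ z : ℝ, z / (8 * n) = z * e / 8 := fun z => by rw [he]; field_simp
  rw [← he] at hy
  have hlip := h.lip
  simp only [hdiv8] at hlip
  rw [hdiv]
  obtain ⟨hb1, hb2⟩ := abs_le.1 hb
  have hUe : U * e ≤ 71 / 100 * q := by
    have h1 : U * e = (m * U) * (q * e) := by linear_combination (-U * e) * hqm
    have h2 : 71 / 100 * q = (71 / 100 * n) * (q * e) := by linear_combination (-71/100 * q) * hen
    rw [h1, h2]; gcongr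
  have hqe : q * e ≤ q * (1 / 32) := by gcongr
  have hxe : x * e ≤ 3 / 4 * q := by
    have : x * e ≤ (U + q) * e := by gcongr
    linarith
  have hxe' : - (1/32 * q) ≤ x * e := by
    have : -q * e ≤ x * e := by gcongr
    linarith
  have hyx : y - x = b - x * e := by rw [hy]; ring
  have habs : |y - x| ≤ 7 / 4 * q := by
    rw [hyx, abs_le]; constructor <;> linarith
  refine ⟨habs, ?_⟩
  -- small x
  have small : ∀ z, z ≤ q → m * g z ≤ Z / 5 := by
    intro z hz
    rcases le_or_gt z 0 with h0 | h0
    · rw [h.zero z h0]; linarith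
    · have h1 := hlip 0 z h0.le
      rw [h.zero 0 le_rfl] at h1
      have h2 : min z U * g z * e ≤ 1 * g z * (1/32) := by
        have := h.nonneg z
        have h3 : min z U ≤ 1 := (min_le_left _ _).trans (by linarith)
        have : 0 ≤ min z U := by positivity
        gcongr
      have h3 : g z ≤ q * (Z / 6 + g z / 256) := by
        have : 0 ≤ Z / 6 + g z / 256 := by have := h.nonneg z; positivity
        calc g z ≤ z * (Z / 6 + g z / 256) := by
              refine le_trans (by linarith) (h1.trans ?_)
              rw [sub_zero]
              exact mul_le_mul_of_nonneg_left (by linarith) (by linarith)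
          _ ≤ _ := by gcongr
      have h4 : m * g z ≤ m * (q * (Z / 6 + g z / 256)) := by gcongr
      have h5 : m * (q * (Z / 6 + g z / 256)) = Z / 6 + g z / 256 := by
        linear_combination (Z / 6 + g z / 256) * hqm
      have h6 : g z ≤ m * g z := by nlinarith only [h.nonneg z, hm]
      linarith
  rcases lt_or_ge x 0 with hx0 | hx0
  · rw [h.zero x hx0.le]
    have hyq : y ≤ q := by 
      have : x * (1 - e) ≤ 0 := mul_nonpos_of_nonpos_of_nonneg hx0.le (by linarith)
      rw [hy]; linarith
    have h1 := small y hyq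
    have h0 := h.nonneg y
    have h6 : g y ≤ m * g y := by nlinarith only [h0, hm]
    rw [sub_zero, abs_of_nonneg h0]
    have h7 : y - x ≤ 2 := by linarith [(abs_le.1 habs).2]
    have h8 : g y * (y - x) ≤ g y * 2 := by gcongr
    linarith
  rcases le_or_gt x y with hxy | hxy
  · have hxU : x ≤ U := by
      by_contra hc
      push Not at hc
      have := hbU hc
      have : 0 < x * e := mul_pos (by linarith) he0
      linarith
    have hδ : y - x ≤ q := by
      have : 0 ≤ x * e := by positivity
      linarith
    have hdg : 0 ≤ g y - g x := by linarith [h.mono hxy]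
    rw [abs_of_nonneg hdg]
    obtain ⟨dg, hdge⟩ : ∃ dg, dg = g y - g x := ⟨_, rfl⟩
    rw [← hdge]
    rw [← hdge] at hdg
    have hgy : g y = g x + dg := by linarith
    have hl := hlip x y hxy
    rw [← hdge] at hl
    have h0 := h.nonneg x
    have hyU0 : 0 ≤ min y U := le_min (by linarith) hU.le
    have hp : min y U * g y * e ≤ (x + 1) * (g x * e) + 71/100 * dg := by
      rw [hgy]
      have h1 : min y U * (g x * e) ≤ (x + 1) * (g x * e) := by
        gcongr; exact (min_le_left _ _).trans (by linarith)
      have h2 : min y U * e * dg ≤ 71/100 * dg := by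
        gcongr
        calc min y U * e ≤ U * e := by gcongr; exact min_le_right _ _
          _ ≤ 71/100 * q := hUe
          _ ≤ _ := by linarith
      linarith
    have hP0 : 0 ≤ min y U * g y * e := by have := h.nonneg y; positivity
    have hl2 : m * dg ≤ Z / 6 + min y U * g y * e / 8 := by
      have : m * dg ≤ m * (q * (Z / 6 + min y U * g y * e / 8)) := by
        gcongr; exact hl.trans (by gcongr)
      linarith [show m * (q * (Z / 6 + min y U * g y * e / 8)) = (Z / 6 + min y U * g y * e / 8) by
        linear_combination (Z / 6 + min y U * g y * e / 8) * hqm]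
    have hgx : g x * e ≤ g x * x * e + Z := by
      rcases le_or_gt x q with hc | hc
      · have := small x hc
        have : g x ≤ m * g x := by nlinarith only [h0, hm]
        have : g x * e ≤ g x * 1 := by gcongr; linarith
        have : 0 ≤ g x * x * e := by positivity
        linarith
      · rcases le_or_gt 1 x with hc1 | hc1
        · have : g x * 1 * e ≤ g x * x * e := by gcongr
          linarith
        · have h1 := hlip 0 x hx0
          rw [h.zero 0 le_rfl] at h1
          have h2 : min x U * g x * e ≤ 1 * g x * (1/32) := by
            have h3 : min x U ≤ 1 := (min_le_left _ _).trans (by linarith)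
            have : 0 ≤ min x U := le_min hx0 hU.le
            gcongr
          have h3 : g x ≤ Z / 6 + g x / 256 := by
            have : 0 ≤ Z / 6 + g x / 256 := by positivity
            calc g x ≤ x * (Z / 6 + g x / 256) := by
                  refine le_trans (by linarith) (h1.trans ?_)
                  rw [sub_zero]
                  exact mul_le_mul_of_nonneg_left (by linarith) (by linarith)
              _ ≤ 1 * (Z / 6 + g x / 256) := by gcongr
              _ = _ := one_mul _
          have : g x * e ≤ g x * 1 := by gcongr; linarith
          have : 0 ≤ g x * x * e := by positivity
          linarith
    have h6 : dg ≤ m * dg := by nlinarith only [hdg, hm]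
    have h7 : dg * (y - x) ≤ dg * 1 := by gcongr; linarith
    have : 0 ≤ g x * x * e := by positivity
    linarith
  · have hdg : 0 ≤ g x - g y := by linarith [h.mono hxy.le]
    rw [abs_sub_comm, abs_of_nonneg hdg]
    rw [abs_sub_comm, abs_of_pos (by linarith)] at habs
    have hl := hlip y x hxy.le
    have h0 := h.nonneg x
    have h1 : min x U * g x * e ≤ g x * x * e := by
      rw [mul_comm (g x)]; gcongr; exact min_le_left _ _
    obtain ⟨X, hX⟩ : ∃ X, X = g x * x * e := ⟨_, rfl⟩
    have hX0 : 0 ≤ X := by rw [hX]; positivity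
    rw [← hX] at h1 ⊢
    obtain ⟨δ, hδ⟩ : ∃ δ, δ = x - y := ⟨_, rfl⟩
    rw [← hδ] at hl habs
    have hδ0 : 0 < δ := by linarith
    have hA : 0 ≤ Z / 6 + X / 8 := by positivity
    have h2 : g x - g y ≤ δ * (Z / 6 + X / 8) := hl.trans (by gcongr)
    have h3 : (g x - g y) * (δ + m / 3) ≤ δ * (Z / 6 + X / 8) * (δ + m / 3) := by gcongr
    have h4 : δ * (δ + m / 3) ≤ 4 := by
      have : δ * (δ + m/3) ≤ (7/4*q) * (7/4*q + m/3) := by gcongr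
      nlinarith only [this, hqm, hq0, hq1]
    have h5 : δ * (Z / 6 + X / 8) * (δ + m / 3) ≤ 4 * (Z / 6 + X / 8) := by nlinarith only [h4, hA]
    have h6 : (g y - g x) * (y - x) = (g x - g y) * δ := by rw [hδ]; ring
    rw [h6]; linarith

lemma sum_telescope (F h : ℕ → ℝ) (e : ℝ) (r s : ℕ) (hrs : r ≤ s)
    (hh : ∀ t, r ≤ t → t ≤ s → F (t + 1) - F t - e ≤ h t) :
    F (s + 1) - F r - ((s : ℝ) - r + 1) * e ≤ ∑ t ∈ Finset.Icc r s, h t := by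
  induction s, hrs using Nat.le_induction with
  | base => simpa using hh r le_rfl le_rfl
  | succ s hs ih =>
    rw [Finset.sum_Icc_succ_top (by omega)]
    have h1 := ih (fun t h1 h2 => hh t h1 (by omega))
    have h2 := hh (s + 1) (by omega) le_rfl
    push_cast
    linarith

lemma GP.potential {g : ℝ → ℝ} {n Z U : ℝ} (h : GP g n Z U) :
    ∃ Φ : ℝ → ℝ, Φ 0 = 0 ∧ ∀ x y, Φ y - Φ x ≤ g y * (y - x) := by
  refine ⟨fun x => ∫ s in (0:ℝ)..x, g s, by simp, fun x y => ?_⟩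
  have hi : ∀ a b, IntervalIntegrable g MeasureTheory.volume a b :=
    fun a b => h.mono.intervalIntegrable
  simp only
  rw [intervalIntegral.integral_interval_sub_left (hi _ _) (hi _ _)]
  rcases le_total x y with hxy | hxy
  · calc ∫ s in x..y, g s ≤ ∫ s in x..y, g y :=
        intervalIntegral.integral_mono_on hxy (hi _ _) (by simp) (fun s hs => h.mono hs.2)
      _ = _ := by simp [mul_comm]
  · rw [intervalIntegral.integral_symm]
    have : ∫ s in y..x, g y ≤ ∫ s in y..x, g s :=
        intervalIntegral.integral_mono_on hxy (by simp) (hi _ _) (fun s hs => h.mono hs.1)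
    simp only [intervalIntegral.integral_const, smul_eq_mul] at this
    linarith

lemma GP.dnp {g : ℝ → ℝ} {n Z U m : ℝ} (h : GP g n Z U) (hZ : 0 < Z) (hm : 1 ≤ m) (hU : 0 < U)
    (hn : 32 * m ^ 2 ≤ n) (hUn : m * U ≤ 71 / 100 * n) (T : ℕ) (x b : ℕ → ℝ)
    (hb : ∀ t, 1 ≤ t → t ≤ T → |b t| ≤ 1 / m) (hx1 : x 1 = 0)
    (hrec : ∀ t, 1 ≤ t → t ≤ T → x (t + 1) =
      if (0 ≤ x t ∧ x t ≤ U) ∨ (x t < 0 ∧ 0 < b t) ∨ (U < x t ∧ b t < 0)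
      then (1 - 1 / n) * x t + b t else (1 - 1 / n) * x t) :
    (∀ t, 1 ≤ t → t ≤ T →
      |g (x t) - g (x (t + 1))| ≤ 7 / 4 * (1 / m) * (Z / 6 + U / (8 * n))) ∧
    (∀ r s, 1 ≤ r → r ≤ s → s ≤ T →
      - (U + 1) - ((s : ℝ) - r + 1) * Z ≤
        ∑ t ∈ Finset.Icc r s, (g (x t) * b t - m / 3 * |g (x t) - g (x (t + 1))|)) ∧
    (∀ r s, 1 ≤ r → r ≤ s → s ≤ T →
      - (U + 1) - ((s : ℝ) - r + 1) * (Z + (U + 1) / n) ≤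
        ∑ t ∈ Finset.Icc r s,
          (g (x t) * b t - m / 3 * |g (x t) - g (x (t + 1))| - b t)) := by
  have hm0 : 0 < m := by linarith
  have hn32 : 32 ≤ n := by nlinarith
  have hn0 : 0 < n := by linarith
  have hq0 : 0 < 1 / m := by positivity
  have hq1 : 1 / m ≤ 1 := by rw [div_le_one hm0]; exact hm
  have he0 : 0 < 1 / n := by positivity
  have he1 : 1 / n ≤ 1 := by rw [div_le_one hn0]; linarith
  -- effective bit
  obtain ⟨c, hc⟩ : ∃ c : ℕ → ℝ, ∀ t, c t =
      if (0 ≤ x t ∧ x t ≤ U) ∨ (x t < 0 ∧ 0 < b t) ∨ (U < x t ∧ b t < 0) then b t else 0 :=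
    ⟨_, fun t => rfl⟩
  have hrec' : ∀ t, 1 ≤ t → t ≤ T → x (t + 1) = (1 - 1 / n) * x t + c t := by
    intro t h1 h2
    rw [hrec t h1 h2, hc t]
    split_ifs <;> simp
  have hcb : ∀ t, 1 ≤ t → t ≤ T → |c t| ≤ 1 / m := by
    intro t h1 h2
    rw [hc t]; split_ifs
    · exact hb t h1 h2
    · simpa using hm0.le
  have hc0 : ∀ t, x t < 0 → 0 ≤ c t := by
    intro t ht
    rw [hc t]; split_ifs with h1
    · rcases h1 with h1 | h1 | h1 <;> linarith [h1.1, h1.2]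
    · exact le_rfl
  have hcU : ∀ t, U < x t → c t ≤ 0 := by
    intro t ht
    rw [hc t]; split_ifs with h1
    · rcases h1 with h1 | h1 | h1 <;> linarith [h1.1, h1.2]
    · exact le_rfl
  have hcg : ∀ t, g (x t) * c t ≤ g (x t) * b t := by
    intro t
    rw [hc t]; split_ifs with h1
    · exact le_rfl
    · push Not at h1
      obtain ⟨h1, h2, h3⟩ := h1
      rcases lt_or_ge (x t) 0 with h0 | h0
      · rw [h.zero _ h0.le]; simp
      · have := h3 (h1 h0)
        have := h.nonneg (x t)
        rw [mul_zero]; positivity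
  have hcg' : ∀ t, g (x t) * c t - c t ≤ g (x t) * b t - b t := by
    intro t
    rw [hc t]; split_ifs with h1
    · exact le_rfl
    · push Not at h1
      obtain ⟨h1, h2, h3⟩ := h1
      rcases lt_or_ge (x t) 0 with h0 | h0
      · rw [h.zero _ h0.le]; have := h2 h0; linarith
      · rw [h.one _ (h1 h0).le]; linarith
  have hxb : ∀ t, 1 ≤ t → t ≤ T + 1 → -(1 / m) ≤ x t ∧ x t ≤ U + 1 / m := by
    intro t ht
    induction t, ht using Nat.le_induction with
    | base => intro _; rw [hx1]; constructor <;> linarith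
    | succ t ht ih =>
      intro h2
      obtain ⟨i1, i2⟩ := ih (by omega)
      have hcb := abs_le.1 (hcb t ht (by omega))
      rw [hrec' t ht (by omega)]
      rcases lt_or_ge (x t) 0 with h0 | h0
      · have := hc0 t h0
        have := mul_neg_of_pos_of_neg he0 h0
        have : (1 - 1 / n) * x t ≤ 0 :=
          mul_nonpos_of_nonneg_of_nonpos (by linarith) h0.le
        constructor <;> linarith
      have := mul_nonneg he0.le h0
      have : 0 ≤ (1 - 1 / n) * x t := mul_nonneg (by linarith) h0
      rcases le_or_gt (x t) U with h4 | h4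
      · constructor <;> linarith
      · have := hcU t h4
        constructor <;> linarith
  have hstep : ∀ t, 1 ≤ t → t ≤ T → _ := fun t h1 h2 =>
    h.step hZ hm hU hn hUn (x t) (x (t+1)) (c t) (hxb t h1 (by omega)).1 (hxb t h1 (by omega)).2
      (hcb t h1 h2) (hc0 t) (hcU t) (hrec' t h1 h2)
  obtain ⟨Φ, hΦ0, hΦ⟩ := h.potential
  have hΦnn : ∀ z, 0 ≤ Φ z := fun z => by
    have := hΦ z 0
    rw [h.zero 0 le_rfl] at this; linarith
  have hΦle : ∀ z, Φ z ≤ max z 0 := fun z => by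
    have h1 := hΦ 0 z
    have := h.nonneg z
    have := h.le_one z
    rcases le_total z 0 with h0 | h0
    · rw [h.zero z h0] at h1
      rw [max_eq_right h0]; linarith
    · rw [max_eq_left h0]; nlinarith
  have hΦU : ∀ z, z - U ≤ Φ z := fun z => by
    have h1 := hΦ z U
    rw [h.one U le_rfl] at h1
    linarith [hΦnn U]
  have hpot : ∀ t, 1 ≤ t → t ≤ T →
      Φ (x (t+1)) - Φ (x t) - Z ≤ g (x t) * c t - m / 3 * |g (x t) - g (x (t + 1))| := by
    intro t h1 h2
    have h3 := (hstep t h1 h2).2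
    have h4 := hΦ (x t) (x (t+1))
    rw [abs_sub_comm] at h3
    have h5 : c t = x (t+1) - x t + x t / n := by rw [hrec' t h1 h2]; ring
    have h6 : g (x t) * x t / n = g (x t) * (x t / n) := by ring
    rw [h5]
    rw [h6] at h3
    linarith
  refine ⟨?_, ?_, ?_⟩
  · intro t h1 h2
    have h3 := (hstep t h1 h2).1
    have key : ∀ u v, u ≤ v → |u - v| ≤ 7 / 4 * (1 / m) →
        |g u - g v| ≤ 7 / 4 * (1 / m) * (Z / 6 + U / (8 * n)) := by
      intro u v huv hd
      have h4 := h.lip u v huv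
      rw [abs_sub_comm, abs_of_nonneg (by linarith [h.mono huv])]
      rw [abs_sub_comm, abs_of_nonneg (by linarith)] at hd
      have h0 := h.nonneg v
      have h1 := h.le_one v
      refine h4.trans ?_
      have h5 : min v U * g v / (8 * n) ≤ U / (8 * n) := by
        gcongr
        calc min v U * g v ≤ U * g v := by gcongr; exact min_le_right _ _
          _ ≤ U * 1 := by gcongr
          _ = U := mul_one U
      calc _ ≤ (v - u) * (Z / 6 + U / (8 * n)) := by gcongr
        _ ≤ _ := by gcongr
    rcases le_total (x t) (x (t+1)) with h4 | h4
    · exact key _ _ h4 (by rwa [abs_sub_comm])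
    · rw [abs_sub_comm]; exact key _ _ h4 h3
  · intro r s hr hrs hs
    have := sum_telescope (fun t => Φ (x t))
      (fun t => g (x t) * b t - m / 3 * |g (x t) - g (x (t + 1))|) Z r s hrs
      (fun t h1 h2 => by
        have := hpot t (by omega) (by omega)
        have := hcg t
        linarith)
    have h1 := hΦnn (x (s+1))
    have h2 := hΦle (x r)
    have h3 : max (x r) 0 ≤ U + 1 := by
      apply max_le _ (by linarith)
      linarith [(hxb r hr (by omega)).2]
    linarith
  · intro r s hr hrs hs
    have := sum_telescope (fun t => Φ (x t) - x t)
      (fun t => g (x t) * b t - m / 3 * |g (x t) - g (x (t + 1))| - b t) (Z + (U + 1) / n) r s hrs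
      (fun t h1 h2 => by
        have h3 := hpot t (by omega) (by omega)
        have h4 := hcg' t
        have h5 : c t = x (t+1) - x t + x t / n := by
          rw [hrec' t (by omega) (by omega)]; ring
        have h6 : x t / n ≤ (U + 1) / n := by
          gcongr; linarith [(hxb t (by omega) (by omega)).2]
        linarith)
    have h1 := hΦU (x (s+1))
    have h2 := hΦle (x r)
    have h3 : max (x r) 0 ≤ x r + 1 := by
      apply max_le <;> linarith [(hxb r hr (by omega)).1]
    linarith

lemma erf_hasDerivAt (x : ℝ) :
    HasDerivAt erf (2 / Real.sqrt Real.pi * Real.exp (-x ^ 2)) x := by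
  unfold erf
  apply HasDerivAt.const_mul
  have hc : Continuous (fun s : ℝ => Real.exp (-s ^ 2)) := by fun_prop
  exact intervalIntegral.integral_hasDerivAt_right (hc.intervalIntegrable _ _)
    (hc.stronglyMeasurableAtFilter _ _) hc.continuousAt

lemma erf_zero : erf 0 = 0 := by simp [erf]

lemma erf_mono : Monotone erf := by
  apply monotone_of_hasDerivAt_nonneg (f' := fun x => 2 / Real.sqrt Real.pi * Real.exp (-x ^ 2))
    erf_hasDerivAt
  intro x; simp only [Pi.zero_apply]; positivity

lemma erf_one : 1 / 2 ≤ erf 1 := by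
  unfold erf
  have h1 : (2:ℝ)/3 ≤ ∫ s in (0:ℝ)..1, Real.exp (-s ^ 2) := by
    calc (2:ℝ)/3 = ∫ s in (0:ℝ)..1, (1 - s ^ 2) := by
          rw [intervalIntegral.integral_sub (by simp) (by
            apply Continuous.intervalIntegrable; fun_prop)]
          simp; norm_num
      _ ≤ _ := by
          apply intervalIntegral.integral_mono_on (by norm_num)
          · apply Continuous.intervalIntegrable; fun_prop
          · apply Continuous.intervalIntegrable; fun_prop
          · intro s _
            linarith [Real.add_one_le_exp (-s ^ 2)]
  have h2 : 1 ≤ 2 / Real.sqrt Real.pi := by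
    rw [one_le_div (by positivity)]
    rw [Real.sqrt_le_left (by norm_num)]
    linarith [Real.pi_le_four]
  nlinarith

lemma gtilde_hasDerivAt (n Z x : ℝ) (hn : 0 < n) :
    HasDerivAt (gtilde n Z) (Z / (4 * Real.sqrt Real.pi) * Real.exp (-(x ^ 2 / (16 * n)))
      + x / (8 * n) * gtilde n Z x) x := by
  have h1 : HasDerivAt (fun y => erf (y / Real.sqrt (8 * n)))
      (2 / Real.sqrt Real.pi * Real.exp (-(x / Real.sqrt (8 * n)) ^ 2) * (1 / Real.sqrt (8 * n))) x :=
    HasDerivAt.comp (h₂ := erf) x (erf_hasDerivAt (x / Real.sqrt (8 * n)))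
      ((hasDerivAt_id x).div_const _)
  have h2 : HasDerivAt (fun y : ℝ => Real.exp (y ^ 2 / (16 * n)))
      (Real.exp (x ^ 2 / (16 * n)) * (2 * x / (16 * n))) x := by
    have := (((hasDerivAt_id x).pow 2).div_const (16 * n)).exp
    simpa using this
  have h3 := (h1.const_mul (Real.sqrt (n / 8) * Z)).mul h2
  refine h3.congr_deriv ?_
  unfold gtilde
  have hs : (x / Real.sqrt (8 * n)) ^ 2 = x ^ 2 / (8 * n) := by
    rw [div_pow, Real.sq_sqrt (by positivity)]
  have hs2 : Real.sqrt (n / 8) * (1 / Real.sqrt (8 * n)) = 1 / 8 := by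
    have : Real.sqrt (8 * n) = 8 * Real.sqrt (n / 8) := by
      rw [show 8 * n = 8 ^ 2 * (n / 8) by ring, Real.sqrt_mul (by norm_num),
        Real.sqrt_sq (by norm_num)]
    rw [this]
    have : 0 < Real.sqrt (n / 8) := by positivity
    field_simp
  have he : Real.exp (-(x ^ 2 / (16 * n))) =
      Real.exp (-(x ^ 2 / (8 * n))) * Real.exp (x ^ 2 / (16 * n)) := by
    rw [← Real.exp_add]; congr 1; field_simp; ring
  rw [hs, he]
  have hpi : 0 < Real.sqrt Real.pi := by positivity
  have : Z / (4 * Real.sqrt Real.pi) = (Real.sqrt (n / 8) * (1 / Real.sqrt (8 * n))) * Z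
      * (2 / Real.sqrt Real.pi) := by rw [hs2]; field_simp; ring
  rw [this]
  field_simp
  ring

lemma gtilde_nonneg {n Z x : ℝ} (hn : 0 < n) (hZ : 0 < Z) (hx : 0 ≤ x) : 0 ≤ gtilde n Z x := by
  unfold gtilde
  have : 0 ≤ erf (x / Real.sqrt (8 * n)) := by
    rw [← erf_zero]; exact erf_mono (by positivity)
  positivity

lemma gtilde_nonpos {n Z x : ℝ} (hn : 0 < n) (hZ : 0 < Z) (hx : x ≤ 0) : gtilde n Z x ≤ 0 := by
  unfold gtilde
  have : erf (x / Real.sqrt (8 * n)) ≤ 0 := by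
    rw [← erf_zero]; exact erf_mono (div_nonpos_of_nonpos_of_nonneg hx (by positivity))
  have h2 : 0 ≤ Real.sqrt (n / 8) * Z := by positivity
  exact mul_nonpos_of_nonpos_of_nonneg (mul_nonpos_of_nonneg_of_nonpos h2 this) (by positivity)

lemma gtilde_strictMonoOn {n Z : ℝ} (hn : 0 < n) (hZ : 0 < Z) :
    StrictMonoOn (gtilde n Z) (Set.Ici 0) := by
  apply strictMonoOn_of_deriv_pos (convex_Ici 0)
  · intro x _
    exact (gtilde_hasDerivAt n Z x hn).continuousAt.continuousWithinAt
  · intro x hx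
    rw [interior_Ici] at hx
    have hx : 0 < x := hx
    rw [(gtilde_hasDerivAt n Z x hn).deriv]
    have := gtilde_nonneg hn hZ hx.le
    positivity

lemma gtilde_lip {n Z u v : ℝ} (hn : 0 < n) (hZ : 0 < Z) (hu : 0 ≤ u) (huv : u ≤ v) :
    gtilde n Z v - gtilde n Z u ≤ (v - u) * (Z / 6 + v * gtilde n Z v / (8 * n)) := by
  have h := Convex.image_sub_le_mul_sub_of_deriv_le (convex_Icc u v) (f := gtilde n Z)
    (C := Z / 6 + v * gtilde n Z v / (8 * n))
    (fun x _ => (gtilde_hasDerivAt n Z x hn).continuousAt.continuousWithinAt)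
    (fun x _ => (gtilde_hasDerivAt n Z x hn).differentiableAt.differentiableWithinAt)
    (by
      intro x hx
      rw [interior_Icc] at hx
      rw [(gtilde_hasDerivAt n Z x hn).deriv]
      have h1 : gtilde n Z x ≤ gtilde n Z v :=
        (gtilde_strictMonoOn hn hZ).monotoneOn (hu.trans hx.1.le) (hu.trans huv) hx.2.le
      have h0 := gtilde_nonneg hn hZ (hu.trans hx.1.le)
      have hx0 : 0 ≤ x := hu.trans hx.1.le
      have h2 : x / (8 * n) * gtilde n Z x ≤ v * gtilde n Z v / (8 * n) := by
        rw [div_mul_eq_mul_div]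
        gcongr
        · exact hu.trans huv
        · exact hx.2.le
      have h3 : Real.exp (-(x ^ 2 / (16 * n))) ≤ 1 := by
        rw [Real.exp_le_one_iff]; simp; positivity
      have h4 : (3 / 2 : ℝ) ≤ Real.sqrt Real.pi := by
        apply Real.le_sqrt_of_sq_le; linarith [Real.pi_gt_three]
      have h5 : Z / (4 * Real.sqrt Real.pi) ≤ Z / 6 := by gcongr; linarith
      have h6 : Z / (4 * Real.sqrt Real.pi) * Real.exp (-(x ^ 2 / (16 * n))) ≤ Z / 6 * 1 := by
        gcongr
      linarith)
  have := h u ⟨le_rfl, huv⟩ v ⟨huv, le_rfl⟩ huv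
  linarith

lemma U_le {n Z U : ℝ} (hn : 32 ≤ n) (hZ : 0 < Z) (hL : 1 ≤ Real.log (1 / Z))
    (hU : 0 < U) (hg : gtilde n Z U = 1) : U ≤ 4 * Real.sqrt (n * Real.log (1 / Z)) := by
  have hn0 : 0 < n := by linarith
  set L := Real.log (1 / Z) with hLdef
  by_contra hc
  push Not at hc
  have h1 := gtilde_strictMonoOn hn0 hZ (a := 4 * Real.sqrt (n * L)) (b := U)
    (by simp) hU.le hc
  rw [hg] at h1
  apply absurd h1
  push Not
  unfold gtilde
  have h2 : Real.exp ((4 * Real.sqrt (n * L)) ^ 2 / (16 * n)) = 1 / Z := by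
    rw [mul_pow, Real.sq_sqrt (by positivity)]
    rw [show 4 ^ 2 * (n * L) / (16 * n) = L by field_simp; norm_num]
    rw [hLdef, Real.exp_log (by positivity)]
  rw [h2]
  have h3 : 1 / 2 ≤ erf (4 * Real.sqrt (n * L) / Real.sqrt (8 * n)) := by
    refine erf_one.trans (erf_mono ?_)
    rw [one_le_div (by positivity)]
    calc Real.sqrt (8 * n) ≤ Real.sqrt (4 ^ 2 * (n * L)) := by
          apply Real.sqrt_le_sqrt; nlinarith
      _ = _ := by rw [Real.sqrt_mul (by norm_num), Real.sqrt_sq (by norm_num)]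
  have h4 : 2 ≤ Real.sqrt (n / 8) := by
    apply Real.le_sqrt_of_sq_le; linarith
  have h5 : Real.sqrt (n / 8) * Z * erf (4 * Real.sqrt (n * L) / Real.sqrt (8 * n)) * (1 / Z)
      = Real.sqrt (n / 8) * erf (4 * Real.sqrt (n * L) / Real.sqrt (8 * n)) := by field_simp
  rw [h5]
  nlinarith

lemma gconf_GP {n Z U : ℝ} (hn : 0 < n) (hZ : 0 < Z) (hU : 0 < U) (hg : gtilde n Z U = 1) :
    GP (gconf n Z) n Z U := by
  have hmono := (gtilde_strictMonoOn hn hZ).monotoneOn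
  have hzero : ∀ x, x ≤ 0 → gconf n Z x = 0 := fun x hx => by
    unfold gconf
    rw [max_eq_right (gtilde_nonpos hn hZ hx)]; simp
  have hone : ∀ x, U ≤ x → gconf n Z x = 1 := fun x hx => by
    unfold gconf
    have := hmono hU.le (hU.le.trans hx : (0:ℝ) ≤ x) hx
    rw [hg] at this
    rw [max_eq_left (by linarith), min_eq_right this]
  have hmid : ∀ x, 0 ≤ x → x ≤ U → gconf n Z x = gtilde n Z x := fun x h0 hx => by
    unfold gconf
    have := hmono h0 hU.le hx
    rw [hg] at this
    rw [max_eq_left (gtilde_nonneg hn hZ h0), min_eq_left this]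
  have hnn : ∀ x, 0 ≤ gconf n Z x := fun x => by
    unfold gconf; exact le_min (le_max_right _ _) zero_le_one
  have hpos : ∀ x, 0 ≤ x → gconf n Z x = gtilde n Z (min x U) := fun x h0 => by
    rcases le_total x U with h | h
    · rw [min_eq_left h, hmid x h0 h]
    · rw [min_eq_right h, hone x h, hg]
  have hlip : ∀ u v, u ≤ v →
      gconf n Z v - gconf n Z u ≤ (v - u) * (Z / 6 + min v U * gconf n Z v / (8 * n)) := by
    intro u v huv
    rcases le_total v 0 with hv | hv
    · rw [hzero v hv, hzero u (huv.trans hv)]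
      have : 0 ≤ v - u := by linarith
      simp; positivity
    · have hu : gconf n Z u = gtilde n Z (min (max u 0) U) := by
        rcases le_total u 0 with h | h
        · rw [hzero u h, max_eq_right h, ← hpos 0 le_rfl, hzero 0 le_rfl]
        · rw [max_eq_left h, hpos u h]
      have hg0 := hnn v
      rw [hpos v hv] at hg0
      rw [hu, hpos v hv]
      have h1 : min (max u 0) U ≤ min v U := min_le_min_right _ (max_le huv hv)
      refine (gtilde_lip hn hZ (le_min (le_max_right _ _) hU.le) h1).trans ?_
      have h2 : 0 ≤ min v U := le_min hv hU.le
      gcongr 1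
      rcases le_total (max u 0) U with h | h
      · rw [min_eq_left h]
        linarith [min_le_left v U, le_max_left u 0]
      · rw [min_eq_right h]
        linarith [min_le_right v U]
  refine ⟨?_, hnn, fun x => min_le_right _ _, hzero, hone, hlip⟩
  intro u v huv
  rcases le_total u 0 with h | h
  · rw [hzero u h]; exact hnn v
  · rw [hpos u h, hpos v (h.trans huv)]
    exact hmono (le_min h hU.le) (le_min (h.trans huv) hU.le) (min_le_min_right _ huv)

lemma nfun_succ (T i : ℕ) : nfun T (i + 1) = nfun T i / 2 := by
  unfold nfun
  have : ((1:ℤ) - ((i + 1 : ℕ) : ℤ)) = (1 - (i:ℤ)) - 1 := by push_cast; ring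
  rw [this, zpow_sub_one₀ (by norm_num)]; ring

lemma nfun_pos {T : ℕ} (hT : 0 < (T:ℝ)) (i : ℕ) : 0 < nfun T i := by
  unfold nfun; positivity

lemma nfun_anti {T : ℕ} (hT : 0 < (T:ℝ)) {i j : ℕ} (hij : i ≤ j) : nfun T j ≤ nfun T i := by
  induction j, hij using Nat.le_induction with
  | base => exact le_rfl
  | succ j _ ih => rw [nfun_succ]; linarith [nfun_pos hT j]

lemma nfun_one (T : ℕ) : nfun T 1 = T := by simp [nfun]

lemma nfun_K_ge {T K : ℕ} {A : ℝ} (hT : 0 < (T:ℝ)) (hA : 0 < A)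
    (hK : (K : ℤ) = ⌊Real.logb 2 ((T : ℝ) / A)⌋ + 1) : A ≤ nfun T K := by
  have h1 : (((K : ℤ) - 1 : ℤ) : ℝ) ≤ Real.logb 2 ((T : ℝ) / A) := by
    rw [hK, add_sub_cancel_right]; exact Int.floor_le _
  rw [Real.le_logb_iff_rpow_le (by norm_num) (by positivity), Real.rpow_intCast,
    le_div_iff₀ hA] at h1
  unfold nfun
  rw [show (1:ℤ) - (K:ℤ) = -((K:ℤ) - 1) by ring, zpow_neg, ← div_eq_mul_inv,
    le_div_iff₀ (by positivity)]
  linarith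

lemma move_comb {E : Type*} [NormedAddCommGroup E] [NormedSpace ℝ E] (p p' q q' : E) (g g' D : ℝ)
    (hg0 : 0 ≤ g) (hg1 : g ≤ 1) (hD : ‖p' - q'‖ ≤ D) :
    ‖((1 - g) • p + g • q) - ((1 - g') • p' + g' • q')‖
      ≤ (1 - g) * ‖p - p'‖ + g * ‖q - q'‖ + |g - g'| * D := by
  have : ((1 - g) • p + g • q) - ((1 - g') • p' + g' • q')
      = (1 - g) • (p - p') + g • (q - q') + (g' - g) • (p' - q') := by module
  rw [this]
  refine (norm_add₃_le).trans ?_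
  rw [norm_smul, norm_smul, norm_smul, Real.norm_of_nonneg (by linarith : 0 ≤ 1 - g),
    Real.norm_of_nonneg hg0, Real.norm_eq_abs, abs_sub_comm g' g]
  gcongr

lemma le_of_sq_le_sq' {a b : ℝ} (h : a ^ 2 ≤ b ^ 2) (hb : 0 ≤ b) : a ≤ b :=
  le_of_abs_le (abs_le_of_sq_le_sq h hb) |>.trans le_rfl

/-- **Lemma 3: regret of the final combiner w.r.t. the k-th expert.** -/
theorem smoothed_ogd_regret_BK_vs_Ak
    (d : ℕ) (W : Set (EuclideanSpace ℝ (Fin d)))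
    (hWne : W.Nonempty) (hWconv : Convex ℝ W) (hWclosed : IsClosed W)
    (G D : ℝ) (hG : 0 < G) (hD : 0 < D)
    (hdiam : ∀ p ∈ W, ∀ q ∈ W, ‖p - q‖ ≤ D)
    (T : ℕ) (f : ℕ → EuclideanSpace ℝ (Fin d) → ℝ)
    (hconv : ∀ t, 1 ≤ t → t ≤ T → ConvexOn ℝ Set.univ (f t))
    (hdiff : ∀ t, 1 ≤ t → t ≤ T → Differentiable ℝ (f t))
    (hgrad : ∀ t, 1 ≤ t → t ≤ T → ∀ p ∈ W, ‖gradient (f t) p‖ ≤ G)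
    (hrange : ∀ t, 1 ≤ t → t ≤ T → ∀ p ∈ W, f t p ∈ Set.Icc 0 (G * D))
    (lam : ℝ) (hlam : 0 ≤ lam)
    (Z : ℝ) (hZdef : Z = 1 / (T : ℝ))
    (hT : (T : ℝ) ≥ max (Real.sqrt lam * Real.logb 2 (T : ℝ)) (Real.exp 1))
    (K : ℕ)
    (hK : (K : ℤ) = ⌊Real.logb 2 ((T : ℝ) / (32 * max lam 1 * Real.log (1 / Z)))⌋ + 1)
    (Ufn : ℕ → ℝ)
    (hU : ∀ i, 1 ≤ i → i ≤ K → 0 < Ufn i ∧ gtilde (nfun T i) Z (Ufn i) = 1)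
    (hUuniq : ∀ i, 1 ≤ i → i ≤ K → ∀ y, 0 < y → gtilde (nfun T i) Z y = 1 → y = Ufn i)
    (w v : ℕ → ℕ → EuclideanSpace ℝ (Fin d))
    (hwW1 : ∀ i, 1 ≤ i → i ≤ K → w i 1 ∈ W)
    (hwrec : ∀ i, 1 ≤ i → i ≤ K → ∀ t, 1 ≤ t → t ≤ T →
      w i (t + 1) ∈ W ∧ ∀ y ∈ W,
        ‖w i t - etafun T D G lam i • gradient (f t) (w i t) - w i (t + 1)‖
          ≤ ‖w i t - etafun T D G lam i • gradient (f t) (w i t) - y‖)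
    (bb : ℕ → ℕ → ℝ)
    (hbb : ∀ i t, bb i t =
      (((f t (v (i - 1) t) + lam * G * ‖v (i - 1) t - v (i - 1) (t + 1)‖)
          - (f t (w i t) + lam * G * ‖w i t - w i (t + 1)‖)) / ((1 + 2) * G * D))
        / max (Real.sqrt lam) 1)
    (xdev : ℕ → ℕ → ℝ)
    (hxdev1 : ∀ i, 2 ≤ i → i ≤ K → xdev i 1 = 0)
    (hxdevrec : ∀ i, 2 ≤ i → i ≤ K → ∀ t, 1 ≤ t → t ≤ T →
      xdev i (t + 1) =
        if (0 ≤ xdev i t ∧ xdev i t ≤ Ufn i) ∨ (xdev i t < 0 ∧ 0 < bb i t)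
            ∨ (Ufn i < xdev i t ∧ bb i t < 0)
        then (1 - 1 / nfun T i) * xdev i t + bb i t
        else (1 - 1 / nfun T i) * xdev i t)
    (hv1 : ∀ t, v 1 t = w 1 t)
    (hv : ∀ i, 2 ≤ i → i ≤ K → ∀ t, 1 ≤ t → t ≤ T + 1 →
      v i t = (1 - gconf (nfun T i) Z (xdev i t)) • v (i - 1) t
                + gconf (nfun T i) Z (xdev i t) • w i t)
    (k : ℕ) (hk1 : 1 ≤ k) (hkK : k ≤ K)
    (c : ℝ) (hc : 0 < c)
    (r s : ℕ) (hr : 1 ≤ r) (hrs : r ≤ s) (hsT : s ≤ T)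
    (htau : (s : ℝ) - r + 1 ≤ c * nfun T k) :
    ∑ t ∈ Finset.Icc r s, (f t (v K t) + lam * G * ‖v K t - v K (t + 1)‖)
      - ∑ t ∈ Finset.Icc r s, (f t (w k t) + lam * G * ‖w k t - w k (t + 1)‖)
    ≤ G * D * max (Real.sqrt lam) 1
        * ((12 * c + 53) * Real.sqrt (nfun T k * Real.log (T : ℝ))
            + 9 + 6 * c + 6 * ((K : ℝ) - k)) := by
  obtain ⟨m, hmdef⟩ : ∃ m, m = max (Real.sqrt lam) 1 := ⟨_, rfl⟩
  rw [← hmdef]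
  simp only [← hmdef] at hbb
  have hm1 : 1 ≤ m := by rw [hmdef]; exact le_max_right _ _
  have hm0 : 0 < m := by linarith
  have hmsq : max lam 1 = m ^ 2 := by
    rw [hmdef]
    rcases le_total lam 1 with h | h
    · rw [max_eq_right h, max_eq_right (by rw [Real.sqrt_le_left (by norm_num)]; linarith)]; norm_num
    · rw [max_eq_left h, max_eq_left (by rw [Real.one_le_sqrt]; exact h), Real.sq_sqrt hlam]
  have hlm : lam ≤ m ^ 2 := by rw [← hmsq]; exact le_max_left _ _
  have hTe : Real.exp 1 ≤ (T : ℝ) := (le_max_right _ _).trans hT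
  have hT0 : 0 < (T : ℝ) := (Real.exp_pos 1).trans_le hTe
  have hZ0 : 0 < Z := by rw [hZdef]; positivity
  have hZT : (T : ℝ) * Z = 1 := by rw [hZdef]; field_simp
  have hlogZ : Real.log (1 / Z) = Real.log (T : ℝ) := by rw [hZdef, one_div_one_div]
  obtain ⟨L, hLdef⟩ : ∃ L, L = Real.log (T : ℝ) := ⟨_, rfl⟩
  have hL1 : 1 ≤ L := by
    rw [hLdef, Real.le_log_iff_exp_le hT0]; exact hTe
  rw [hlogZ, hmsq, ← hLdef] at hK
  rw [← hLdef] at hlogZ ⊢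
  have hnK := nfun_K_ge hT0 (by positivity) hK
  have hnL : ∀ i, i ≤ K → 32 * m ^ 2 * L ≤ nfun T i := fun i hi => hnK.trans (nfun_anti hT0 hi)
  have hnm : ∀ i, i ≤ K → 32 * m ^ 2 ≤ nfun T i := fun i hi => by
    refine le_trans ?_ (hnL i hi)
    have : 0 ≤ 32 * m ^ 2 := by positivity
    nlinarith only [this, hL1]
  have hn32 : ∀ i, i ≤ K → 32 ≤ nfun T i := fun i hi => by
    have := hnm i hi
    nlinarith only [this, hm1]
  have hn0 : ∀ i, 0 < nfun T i := nfun_pos hT0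
  have hnT : ∀ i, 1 ≤ i → nfun T i ≤ T := fun i hi => by
    rw [← nfun_one T]; exact nfun_anti hT0 hi
  -- the scale s_i = sqrt (n_i L)
  obtain ⟨S, hS⟩ : ∃ S : ℕ → ℝ, ∀ i, S i = Real.sqrt (nfun T i * L) := ⟨_, fun i => rfl⟩
  have hSsq : ∀ i, S i ^ 2 = nfun T i * L := fun i => by
    have := hn0 i
    rw [hS, Real.sq_sqrt (by positivity)]
  have hS0 : ∀ i, 0 ≤ S i := fun i => by rw [hS]; positivity
  have hSstep : ∀ i, S i ^ 2 = 2 * S (i + 1) ^ 2 := fun i => by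
    rw [hSsq, hSsq, nfun_succ]; ring
  have hSlo : ∀ i, 7 / 5 * S (i + 1) ≤ S i := fun i => by
    refine le_of_sq_le_sq' ?_ (hS0 i)
    have := hSstep i
    have := sq_nonneg (S (i+1))
    rw [mul_pow]; linarith
  have hShi : ∀ i, S i ≤ 142 / 100 * S (i + 1) := fun i => by
    refine le_of_sq_le_sq' ?_ (mul_nonneg (by norm_num) (hS0 _))
    have := hSstep i
    have := sq_nonneg (S (i+1))
    rw [mul_pow]; linarith
  have hS5 : ∀ i, i ≤ K → 5 ≤ S i := fun i hi => by
    refine le_of_sq_le_sq' ?_ (hS0 i)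
    rw [hSsq]
    have := hn32 i hi
    nlinarith only [this, hL1]
  have hmS : ∀ i, i ≤ K → m * S i ≤ 1775 / 10000 * nfun T i := fun i hi => by
    have h1 := hn0 i
    refine le_of_sq_le_sq' ?_ (by positivity)
    rw [mul_pow, hSsq]
    have h2 := hnL i hi
    have h3 : 32 * m ^ 2 * L * nfun T i ≤ nfun T i * nfun T i := by gcongr
    nlinarith only [h3, h1]
  have hU4 : ∀ i, 1 ≤ i → i ≤ K → Ufn i ≤ 4 * S i := fun i h1 h2 => by
    have := U_le (hn32 i h2) hZ0 (by rw [hlogZ]; exact hL1) (hU i h1 h2).1 (hU i h1 h2).2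
    rwa [hlogZ, ← hS] at this
  have hmU : ∀ i, 1 ≤ i → i ≤ K → m * Ufn i ≤ 71 / 100 * nfun T i := fun i h1 h2 => by
    have h3 : m * Ufn i ≤ m * (4 * S i) := by gcongr; exact hU4 i h1 h2
    linarith [hmS i h2]
  have hGP : ∀ i, 1 ≤ i → i ≤ K → GP (gconf (nfun T i) Z) (nfun T i) Z (Ufn i) :=
    fun i h1 h2 => gconf_GP (hn0 i) hZ0 (hU i h1 h2).1 (hU i h1 h2).2
  -- membership
  have hwW : ∀ i, 1 ≤ i → i ≤ K → ∀ t, 1 ≤ t → t ≤ T + 1 → w i t ∈ W := by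
    intro i h1 h2 t ht1 ht2
    rcases Nat.lt_or_ge 1 t with h | h
    · obtain ⟨u, rfl⟩ : ∃ u, t = u + 1 := ⟨t - 1, by omega⟩
      exact (hwrec i h1 h2 u (by omega) (by omega)).1
    · have : t = 1 := by omega
      rw [this]; exact hwW1 i h1 h2
  have hvW : ∀ i, 1 ≤ i → i ≤ K → ∀ t, 1 ≤ t → t ≤ T + 1 → v i t ∈ W := by
    intro i h1
    induction i, h1 using Nat.le_induction with
    | base => intro h2 t ht1 ht2; rw [hv1]; exact hwW 1 le_rfl h2 t ht1 ht2
    | succ i h1 ih =>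
      intro h2 t ht1 ht2
      rw [hv (i+1) (by omega) h2 t ht1 ht2]
      have hg := hGP (i+1) (by omega) h2
      exact hWconv (ih (by omega) t ht1 ht2) (hwW (i+1) (by omega) h2 t ht1 ht2)
        (by linarith [hg.le_one (xdev (i+1) t)]) (hg.nonneg _) (by ring)
  have hwmove : ∀ i, 1 ≤ i → i ≤ K → ∀ t, 1 ≤ t → t ≤ T →
      lam * ‖w i t - w i (t + 1)‖ ≤ D / 4 := by
    intro i h1 h2 t ht1 ht2
    have hW1 := hwW i h1 h2 t ht1 (by omega)
    have h3 := (hwrec i h1 h2 t ht1 ht2).2 (w i t) hW1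
    have hη : 0 ≤ etafun T D G lam i := by unfold etafun; positivity
    have h4 : ‖etafun T D G lam i • gradient (f t) (w i t)‖ ≤ etafun T D G lam i * G := by
      rw [norm_smul, Real.norm_of_nonneg hη]
      gcongr
      exact hgrad t ht1 ht2 _ hW1
    have h5 : ‖w i t - w i (t + 1)‖ ≤ 2 * (etafun T D G lam i * G) := by
      have e1 : w i t - w i (t + 1) =
        (w i t - etafun T D G lam i • gradient (f t) (w i t) - w i (t + 1))
          + etafun T D G lam i • gradient (f t) (w i t) := by abel
      have e2 : w i t - etafun T D G lam i • gradient (f t) (w i t) - w i t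
        = - (etafun T D G lam i • gradient (f t) (w i t)) := by abel
      rw [e2, norm_neg] at h3
      rw [e1]
      refine (norm_add_le _ _).trans ?_
      linarith
    have h6 : etafun T D G lam i * G = D * Real.sqrt (1 / ((1 + 2 * lam) * nfun T i)) := by
      unfold etafun; field_simp
    have h7 : lam * Real.sqrt (1 / ((1 + 2 * lam) * nfun T i)) ≤ 1 / 8 := by
      have hn := hn0 i
      refine le_of_sq_le_sq' ?_ (by norm_num)
      rw [mul_pow, Real.sq_sqrt (by positivity), mul_one_div, div_le_iff₀ (by positivity)]
      have h8 := hnm i h2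
      have h9 : 32 * lam ≤ nfun T i := by linarith
      nlinarith only [h9, hlam, hn]
    calc lam * ‖w i t - w i (t + 1)‖ ≤ lam * (2 * (etafun T D G lam i * G)) := by gcongr
      _ = 2 * D * (lam * Real.sqrt (1 / ((1 + 2 * lam) * nfun T i))) := by rw [h6]; ring
      _ ≤ 2 * D * (1 / 8) := by gcongr
      _ = D / 4 := by ring
  -- bits bounded
  have hbit : ∀ i, 2 ≤ i → i ≤ K →
      (∀ t, 1 ≤ t → t ≤ T → lam * ‖v (i-1) t - v (i-1) (t + 1)‖ ≤ 2 * D) →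
      ∀ t, 1 ≤ t → t ≤ T → |bb i t| ≤ 1 / m := by
    intro i h1 h2 hP t ht1 ht2
    have a1 := hrange t ht1 ht2 _ (hvW (i-1) (by omega) (by omega) t ht1 (by omega))
    have a2 := hrange t ht1 ht2 _ (hwW i (by omega) h2 t ht1 (by omega))
    have a3 := mul_le_mul_of_nonneg_left (hP t ht1 ht2) hG.le
    have a4 := mul_le_mul_of_nonneg_left (hwmove i (by omega) h2 t ht1 ht2) hG.le
    have a5 : 0 ≤ G * (lam * ‖v (i-1) t - v (i-1) (t + 1)‖) := by positivity
    have a6 : 0 ≤ G * (lam * ‖w i t - w i (t + 1)‖) := by positivity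
    have hGD : 0 < G * D := by positivity
    rw [hbb, abs_div, abs_of_pos hm0]
    gcongr
    rw [abs_div, abs_of_pos (by positivity : 0 < (1 + 2) * G * D), div_le_one (by positivity),
      abs_le]
    have b1 := a1.1
    have b2 := a1.2
    have b3 := a2.1
    have b4 := a2.2
    constructor <;> linarith
  have hdnp := fun i (h1 : 2 ≤ i) (h2 : i ≤ K)
    (hP : ∀ t, 1 ≤ t → t ≤ T → lam * ‖v (i-1) t - v (i-1) (t + 1)‖ ≤ 2 * D) =>
    (hGP i (by omega) h2).dnp hZ0 hm1 (hU i (by omega) h2).1 (hnm i h2) (hmU i (by omega) h2)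
      T (xdev i) (bb i) (hbit i h1 h2 hP) (hxdev1 i h1 h2) (hxdevrec i h1 h2)
  have hcomb : ∀ i, 2 ≤ i → i ≤ K → ∀ t, 1 ≤ t → t ≤ T → ‖v i t - v i (t + 1)‖ ≤
      (1 - gconf (nfun T i) Z (xdev i t)) * ‖v (i-1) t - v (i-1) (t + 1)‖
      + gconf (nfun T i) Z (xdev i t) * ‖w i t - w i (t + 1)‖
      + |gconf (nfun T i) Z (xdev i t) - gconf (nfun T i) Z (xdev i (t + 1))| * D := by
    intro i h1 h2 t ht1 ht2
    rw [hv i h1 h2 t ht1 (by omega), hv i h1 h2 (t+1) (by omega) (by omega)]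
    have hg := hGP i (by omega) h2
    exact move_comb _ _ _ _ _ _ _ (hg.nonneg _) (hg.le_one _)
      (hdiam _ (hvW (i-1) (by omega) (by omega) (t+1) (by omega) (by omega)) _
        (hwW i (by omega) h2 (t+1) (by omega) (by omega)))
  have h2D : ∀ i, i ≤ K → D * (1 / 4 + 4 * (m * S i / nfun T i)) ≤ 2 * D := by
    intro i hi
    have : m * S i / nfun T i ≤ 1775 / 10000 := by
      rw [div_le_iff₀ (hn0 i)]; exact hmS i hi
    nlinarith only [this, hD]
  have hvmove : ∀ i, 1 ≤ i → i ≤ K → ∀ t, 1 ≤ t → t ≤ T →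
      lam * ‖v i t - v i (t + 1)‖ ≤ D * (1 / 4 + 4 * (m * S i / nfun T i)) := by
    intro i h1
    induction i, h1 using Nat.le_induction with
    | base =>
      intro h2 t ht1 ht2
      rw [hv1, hv1]
      have h3 := hwmove 1 le_rfl h2 t ht1 ht2
      have h4 := hn0 1
      have h5 := hS0 1
      have : 0 ≤ D * (4 * (m * S 1 / nfun T 1)) := by positivity
      linarith
    | succ i h1 ih =>
      intro h2 t ht1 ht2
      have hP : ∀ t, 1 ≤ t → t ≤ T → lam * ‖v i t - v i (t + 1)‖ ≤ 2 * D :=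
        fun t a b => (ih (by omega) t a b).trans (h2D i (by omega))
      have h3 := (hdnp (i+1) (by omega) h2 hP).1 t ht1 ht2
      have h4 := hcomb (i+1) (by omega) h2 t ht1 ht2
      simp only [Nat.add_sub_cancel] at h4
      have hg := hGP (i+1) (by omega) h2
      have hg0 := hg.nonneg (xdev (i+1) t)
      have hg1 := hg.le_one (xdev (i+1) t)
      have h5 := ih (by omega) t ht1 ht2
      have h6 := hwmove (i+1) (by omega) h2 t ht1 ht2
      obtain ⟨N, hN⟩ : ∃ N, N = nfun T (i+1) := ⟨_, rfl⟩
      have hNi : nfun T i = 2 * N := by rw [hN, nfun_succ]; ring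
      have hN0 : 0 < N := by rw [hN]; exact hn0 _
      have hNT : N ≤ T := by rw [hN]; exact hnT _ (by omega)
      rw [hNi] at h5
      have h7 := hU4 (i+1) (by omega) h2
      have h8 := hS5 (i+1) h2
      have h9 := hShi i
      have h10 := hS0 i
      rw [← hN] at h3 h4 hg0 hg1 ⊢
      generalize gconf N Z (xdev (i+1) t) = g at *
      generalize gconf N Z (xdev (i+1) (t+1)) = g' at *
      obtain ⟨R, hR⟩ : ∃ R, R = m * S (i+1) / N := ⟨_, rfl⟩
      rw [← hR]
      have hR0 : 0 ≤ R := by rw [hR]; positivity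
      have hRi : m * S i / (2 * N) ≤ 71 / 100 * R := by
        rw [hR, mul_div_assoc', div_le_div_iff₀ (by positivity) hN0]
        have : m * S i * N ≤ m * (142 / 100 * S (i+1)) * N := by gcongr
        linarith
      have hmZ : m * Z ≤ R / 5 := by
        rw [hR, div_div, le_div_iff₀ (by positivity)]
        have q1 : N * Z ≤ 1 := by rw [← hZT]; gcongr
        have q2 : m * (N * Z) ≤ m * 1 := by gcongr
        have q3 : m * 5 ≤ m * S (i+1) := by gcongr
        linarith
      have hmU' : m * (Ufn (i+1) / (8 * N)) ≤ R / 2 := by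
        rw [hR, div_div, mul_div_assoc', div_le_div_iff₀ (by positivity) (by positivity)]
        have : m * Ufn (i+1) * (N * 2) ≤ m * (4 * S (i+1)) * (N * 2) := by gcongr
        linarith
      have hΔ : lam * |g - g'| ≤ R := by
        calc lam * |g - g'| ≤ m ^ 2 * (7 / 4 * (1 / m) * (Z / 6 + Ufn (i+1) / (8 * N))) := by
              gcongr
          _ = 7 / 4 * (m * Z / 6 + m * (Ufn (i+1) / (8 * N))) := by field_simp
          _ ≤ R := by linarith
      have h11 : lam * ‖v i t - v i (t + 1)‖ ≤ D * (1 / 4 + 284 / 100 * R) := by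
        refine h5.trans ?_
        gcongr D * ?_
        linarith
      have h12 : lam * ‖w (i+1) t - w (i+1) (t + 1)‖ ≤ D * (1 / 4 + 284 / 100 * R) := by
        have : 0 ≤ D * (284 / 100 * R) := by positivity
        linarith
      have h13 : lam * |g - g'| * D ≤ R * D := by gcongr
      have h14 := mul_le_mul_of_nonneg_left h4 hlam
      have h15 := mul_le_mul_of_nonneg_left h11 (by linarith : 0 ≤ 1 - g)
      have h16 := mul_le_mul_of_nonneg_left h12 hg0
      have h17 : 0 ≤ D * R := by positivity
      linarith
  have hP : ∀ i, 1 ≤ i → i ≤ K → ∀ t, 1 ≤ t → t ≤ T → lam * ‖v i t - v i (t + 1)‖ ≤ 2 * D :=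
    fun i a b t c d => (hvmove i a b t c d).trans (h2D i b)
  have hbbA : ∀ i t, (f t (v (i-1) t) + lam * G * ‖v (i-1) t - v (i-1) (t + 1)‖)
      - (f t (w i t) + lam * G * ‖w i t - w i (t + 1)‖) = 3 * (G * D * m) * bb i t := by
    intro i t
    rw [hbb]; field_simp; ring
  have hcost : ∀ i, 2 ≤ i → i ≤ K → ∀ t, 1 ≤ t → t ≤ T →
      f t (v i t) + lam * G * ‖v i t - v i (t + 1)‖ ≤
      (f t (v (i-1) t) + lam * G * ‖v (i-1) t - v (i-1) (t + 1)‖)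
      - 3 * (G * D * m) * (gconf (nfun T i) Z (xdev i t) * bb i t
        - m / 3 * |gconf (nfun T i) Z (xdev i t) - gconf (nfun T i) Z (xdev i (t + 1))|) := by
    intro i h1 h2 t ht1 ht2
    have hg := hGP i (by omega) h2
    have hg0 := hg.nonneg (xdev i t)
    have hg1 := hg.le_one (xdev i t)
    have h3 : f t (v i t) ≤ (1 - gconf (nfun T i) Z (xdev i t)) * f t (v (i-1) t)
        + gconf (nfun T i) Z (xdev i t) * f t (w i t) := by
      rw [hv i h1 h2 t ht1 (by omega)]
      exact (hconv t ht1 ht2).2 (Set.mem_univ _) (Set.mem_univ _) (by linarith) hg0 (by ring)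
    have h4 := mul_le_mul_of_nonneg_left (hcomb i h1 h2 t ht1 ht2)
      (by positivity : 0 ≤ lam * G)
    have h5 := hbbA i t
    generalize gconf (nfun T i) Z (xdev i t) = g at *
    generalize gconf (nfun T i) Z (xdev i (t+1)) = g' at *
    have h6 : lam * (G * D * |g - g'|) ≤ m ^ 2 * (G * D * |g - g'|) := by gcongr
    have h7 : 3 * (G * D * m) * (g * bb i t - m / 3 * |g - g'|)
      = g * (3 * (G * D * m) * bb i t) - m ^ 2 * (G * D * |g - g'|) := by ring
    rw [h7, ← h5]
    linarith
  have hGDm : 0 < G * D * m := by positivity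
  have hrs' : (r : ℝ) ≤ s := by exact_mod_cast hrs
  have hτZ : ((s : ℝ) - r + 1) * Z ≤ 1 := by
    rw [← hZT]
    have h1 : (1:ℝ) ≤ r := by exact_mod_cast hr
    have h2 : (s:ℝ) ≤ T := by exact_mod_cast hsT
    gcongr
    linarith
  -- chain
  have hchain : ∀ i, k ≤ i → i ≤ K →
      ∑ t ∈ Finset.Icc r s, (f t (v i t) + lam * G * ‖v i t - v i (t + 1)‖)
      - ∑ t ∈ Finset.Icc r s, (f t (v k t) + lam * G * ‖v k t - v k (t + 1)‖)
      ≤ G * D * m * (30 * (S k - S i) + 6 * ((i : ℝ) - k)) := by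
    intro i hki
    induction i, hki using Nat.le_induction with
    | base => intro _; simp
    | succ i hki ih =>
      intro h2
      have h3 := ih (by omega)
      have h4 := (hdnp (i+1) (by omega) h2 (hP i (by omega) (by omega))).2.1 r s hr hrs hsT
      have h5 : ∑ t ∈ Finset.Icc r s, (f t (v (i+1) t) + lam * G * ‖v (i+1) t - v (i+1) (t + 1)‖)
          ≤ ∑ t ∈ Finset.Icc r s, ((f t (v i t) + lam * G * ‖v i t - v i (t + 1)‖)
      - 3 * (G * D * m) * (gconf (nfun T (i+1)) Z (xdev (i+1) t) * bb (i+1) t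
        - m / 3 * |gconf (nfun T (i+1)) Z (xdev (i+1) t)
          - gconf (nfun T (i+1)) Z (xdev (i+1) (t + 1))|)) := by
        apply Finset.sum_le_sum
        intro t ht
        rw [Finset.mem_Icc] at ht
        exact hcost (i+1) (by omega) h2 t (by omega) (by omega)
      rw [Finset.sum_sub_distrib, ← Finset.mul_sum] at h5
      have h6 := hU4 (i+1) (by omega) h2
      have h7 := hSlo i
      have h8 := mul_le_mul_of_nonneg_left
        (show -(4 * S (i+1) + 2) ≤ _ from le_trans (by linarith) h4)
        (by positivity : 0 ≤ 3 * (G * D * m))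
      have h9 : G * D * m * (30 * (S k - S i) + 6 * ((i : ℝ) - k)) + 3 * (G * D * m) *
          (4 * S (i+1) + 2) ≤ G * D * m * (30 * (S k - S (i+1)) + 6 * (((i+1 : ℕ) : ℝ) - k)) := by
        have : 30 * (S k - S i) + 6 * ((i : ℝ) - k) + 3 * (4 * S (i+1) + 2)
          ≤ 30 * (S k - S (i+1)) + 6 * (((i+1 : ℕ) : ℝ) - k) := by
          push_cast; linarith
        have := mul_le_mul_of_nonneg_left this hGDm.le
        linarith
      linarith
  have hlast : ∑ t ∈ Finset.Icc r s, (f t (v k t) + lam * G * ‖v k t - v k (t + 1)‖)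
      - ∑ t ∈ Finset.Icc r s, (f t (w k t) + lam * G * ‖w k t - w k (t + 1)‖)
      ≤ G * D * m * (12 * S k + 6 + 12 * c * S k + 3 * c) := by
    have hSk := hS0 k
    rcases Nat.lt_or_ge 1 k with h1 | h1
    · have h4 := (hdnp k h1 hkK (hP (k-1) (by omega) (by omega))).2.2 r s hr hrs hsT
      have h5 : ∑ t ∈ Finset.Icc r s, (f t (v k t) + lam * G * ‖v k t - v k (t + 1)‖)
          ≤ ∑ t ∈ Finset.Icc r s, ((f t (w k t) + lam * G * ‖w k t - w k (t + 1)‖)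
      - 3 * (G * D * m) * (gconf (nfun T k) Z (xdev k t) * bb k t
        - m / 3 * |gconf (nfun T k) Z (xdev k t)
          - gconf (nfun T k) Z (xdev k (t + 1))| - bb k t)) := by
        apply Finset.sum_le_sum
        intro t ht
        rw [Finset.mem_Icc] at ht
        have h6 := hcost k h1 hkK t (by omega) (by omega)
        have h7 := hbbA k t
        linarith
      rw [Finset.sum_sub_distrib, ← Finset.mul_sum] at h5
      have h6 := hU4 k hk1 hkK
      have h60 := (hU k hk1 hkK).1
      have h7 : ((s : ℝ) - r + 1) * ((Ufn k + 1) / nfun T k) ≤ c * (4 * S k + 1) := by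
        have hn := hn0 k
        rw [mul_div_assoc', div_le_iff₀ hn]
        calc ((s : ℝ) - r + 1) * (Ufn k + 1) ≤ (c * nfun T k) * (4 * S k + 1) := by gcongr
          _ = _ := by ring
      have h8 := mul_le_mul_of_nonneg_left
        (show -(4 * S k + 2 + c * (4 * S k + 1)) ≤ _ from le_trans (by linarith) h4)
        (by positivity : 0 ≤ 3 * (G * D * m))
      linarith
    · have : k = 1 := by omega
      rw [this] at hSk ⊢
      simp only [hv1, sub_self]
      positivity
  have hfin := hchain K hkK le_rfl
  rw [← hS]
  have hSK := hS0 K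
  have hSk := hS0 k
  have : 30 * (S k - S K) + 6 * ((K : ℝ) - k) + (12 * S k + 6 + 12 * c * S k + 3 * c)
      ≤ (12 * c + 53) * S k + 9 + 6 * c + 6 * ((K : ℝ) - k) := by linarith
  have := mul_le_mul_of_nonneg_left this hGDm.le
  linarith
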